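/- Under the same hypotheses as the main gradient-feedback stability theorem (plant f with Lyapunov function W and constants γ, ζ; steady-state map h; Φ continuously differentiable with u ↦ Φ(h(u),u) having compact sublevel sets and satisfying the L-bound ‖H(u)ᵀ(∇Φ(x',u) − ∇Φ(x,u))‖ ≤ L‖x'−x‖; metric Q with sup_u ‖Q(u)‖ < γ/(ζL)), every strict local minimizer (x*,u*) of min{Φ(x,u) : x = h(u)} — i.e. x* = h(u*) and u* is a strict local minimizer of u ↦ Φ(h(u),u) — is a Lyapunov-stable equilibrium of the interconnection ẋ = f(x,u), u̇ = −Q(u)H(u)ᵀ∇Φ(x,u): for every neighborhood 𝒱 of (x*,u*) there exists a neighborhood 𝒲 of (x*,u*) such that every complete solution starting in 𝒲 remains in 𝒱 for all t ≥ 0. -/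

import Mathlib

open Filter Metric Real
open scoped RealInnerProductSpace Topology NNReal

/-!
Write `φ u = Φ (h u) u` and `e = x - h u`. By the chain rule `G x u := H(u)ᵀ∇Φ(x, u)` equals `∇φ u`
when `e = 0`, and the `L`-bound says `‖G x u - ∇φ u‖ ≤ L ‖e‖`: the controller is a `Q`-gradient flow
of `φ` driven by an inexact gradient. The Lyapunov function of the interconnection is
`φ + (L / ζ) W`. The weight `L / ζ` makes the two errors, of the inexact gradient and of the drift
of `W` along `u`, both of size at most `L ‖e‖`; completing the square for the quadratic form
`⟪Q v, v⟫` bounds their joint contribution by `‖Q‖ (L ‖e‖)²`, which the decay `-(L / ζ) γ ‖e‖²`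
of `W` absorbs as soon as `‖Q‖ ≤ γ / (ζ L)`.

Stability is then read off in two stages, and only `u` has to range over a proper space. Since
`φ ≤ φ + (L / ζ) W`, the input can never cross a small sphere around the strict minimizer; and as
`φ u` is bounded below by its minimum inside that sphere, `W`, hence `‖e‖`, stays small.
-/

section PositiveOperators

theorem two_mul_re_inner_apply_le {𝕜 E : Type*} [RCLike 𝕜] [NormedAddCommGroup E]
    [InnerProductSpace 𝕜 E] {T : E →L[𝕜] E} (hT : T.IsPositive) (x y : E) :
    2 * RCLike.re (inner 𝕜 (T x) y) ≤ RCLike.re (inner 𝕜 (T x) x) + ‖T‖ * ‖y‖ ^ 2 := by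
  have hsymm : RCLike.re (inner 𝕜 (T y) x) = RCLike.re (inner 𝕜 (T x) y) := by
    rw [hT.inner_left_eq_inner_right, inner_re_symm]
  have hsq : 0 ≤ RCLike.re (inner 𝕜 (T (x - y)) (x - y)) := hT.re_inner_nonneg_left _
  have hnorm : RCLike.re (inner 𝕜 (T y) y) ≤ ‖T‖ * ‖y‖ ^ 2 :=
    calc RCLike.re (inner 𝕜 (T y) y) ≤ ‖T y‖ * ‖y‖ := re_inner_le_norm _ _
      _ ≤ ‖T‖ * ‖y‖ * ‖y‖ := by gcongr; exact T.le_opNorm y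
      _ = ‖T‖ * ‖y‖ ^ 2 := by ring
  simp only [map_sub, inner_sub_left, inner_sub_right] at hsq
  linarith

variable {E : Type*} [NormedAddCommGroup E] [InnerProductSpace ℝ E] {T : E →L[ℝ] E}

theorem isPositive_of_symmetric_of_inner_pos (hsymm : ∀ v w, ⟪T v, w⟫ = ⟪v, T w⟫)
    (hpos : ∀ v, v ≠ 0 → 0 < ⟪T v, v⟫) : T.IsPositive := by
  refine ⟨hsymm, fun v => ?_⟩
  rcases eq_or_ne v 0 with rfl | hv
  · simp [ContinuousLinearMap.reApplyInnerSelf_apply]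
  · exact (hpos v hv).le

theorem inner_add_neg_apply_le (hT : T.IsPositive) {g g₀ w : E} {c : ℝ}
    (hg : ‖g - g₀‖ ≤ c) (hw : ‖w‖ ≤ c) : ⟪g₀ + w, -T g⟫ ≤ ‖T‖ * c ^ 2 := by
  have hmid : ‖(2⁻¹ : ℝ) • (g - g₀ - w)‖ ≤ c := by
    rw [norm_smul, norm_inv, Real.norm_ofNat]
    linarith [norm_sub_le (g - g₀) w]
  have hexpand : ⟪g₀ + w, -T g⟫ = 2 * ⟪T g, (2⁻¹ : ℝ) • (g - g₀ - w)⟫ - ⟪T g, g⟫ := by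
    rw [real_inner_comm, inner_neg_left, inner_smul_right, inner_sub_right, inner_sub_right,
      inner_add_right]
    ring
  have hyoung : 2 * ⟪T g, (2⁻¹ : ℝ) • (g - g₀ - w)⟫ ≤ ⟪T g, g⟫ + ‖T‖ * c ^ 2 :=
    (two_mul_re_inner_apply_le hT g _).trans (by gcongr; rfl)
  linarith

theorem inexact_gradient_dissipation_nonpos {g g₀ w : E} {d e γ ζ L : ℝ} (hζ : 0 < ζ) (hL : 0 < L)
    (hT : T.IsPositive) (hT_norm : ‖T‖ ≤ γ / (ζ * L)) (hg : ‖g - g₀‖ ≤ L * e)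
    (hw : ‖w‖ ≤ ζ * e) (hd : d ≤ -γ * e ^ 2) :
    ⟪g₀, -T g⟫ + L / ζ * (d + ⟪w, -T g⟫) ≤ 0 := by
  have hδ : 0 < L / ζ := div_pos hL hζ
  have hw_scaled : ‖(L / ζ) • w‖ ≤ L * e :=
    calc ‖(L / ζ) • w‖ = L / ζ * ‖w‖ := norm_smul_of_nonneg hδ.le w
      _ ≤ L / ζ * (ζ * e) := by gcongr
      _ = L * e := by field_simp
  calc ⟪g₀, -T g⟫ + L / ζ * (d + ⟪w, -T g⟫) = ⟪g₀ + (L / ζ) • w, -T g⟫ + L / ζ * d := by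
        rw [inner_add_left, real_inner_smul_left]; ring
    _ ≤ ‖T‖ * (L * e) ^ 2 + L / ζ * (-γ * e ^ 2) := by
        gcongr; exact inner_add_neg_apply_le hT hg hw_scaled
    _ ≤ γ / (ζ * L) * (L * e) ^ 2 + L / ζ * (-γ * e ^ 2) := by gcongr
    _ = 0 := by field_simp; ring

end PositiveOperators

section PartialGradients

variable {X U : Type*} [NormedAddCommGroup X] [InnerProductSpace ℝ X] [CompleteSpace X]
  [NormedAddCommGroup U] [InnerProductSpace ℝ U] [CompleteSpace U]

theorem fderiv_uncurry_apply_eq_inner_gradient {F : X → U → ℝ} {x : X} {u : U}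
    (hF : DifferentiableAt ℝ (Function.uncurry F) (x, u)) (x' : X) (u' : U) :
    fderiv ℝ (Function.uncurry F) (x, u) (x', u') =
      ⟪gradient (fun y => F y u) x, x'⟫ + ⟪gradient (fun v => F x v) u, u'⟫ := by
  have hfst : HasFDerivAt (fun y => F y u) _ x :=
    hF.hasFDerivAt.comp (f := fun y => (y, u)) x (hasFDerivAt_prodMk_left x u)
  have hsnd : HasFDerivAt (fun v => F x v) _ u :=
    hF.hasFDerivAt.comp u (hasFDerivAt_prodMk_right x u)
  rw [inner_gradient_left, inner_gradient_left, hfst.fderiv, hsnd.fderiv,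
    ContinuousLinearMap.comp_apply, ContinuousLinearMap.comp_apply, ← map_add]
  simp

theorem hasDerivAt_uncurry_along {F : X → U → ℝ} {x : ℝ → X} {u : ℝ → U} {x' : X} {u' : U}
    {t : ℝ} (hF : DifferentiableAt ℝ (Function.uncurry F) (x t, u t)) (hx : HasDerivAt x x' t)
    (hu : HasDerivAt u u' t) :
    HasDerivAt (fun τ => F (x τ) (u τ))
      (⟪gradient (fun y => F y (u t)) (x t), x'⟫ +
        ⟪gradient (fun v => F (x t) v) (u t), u'⟫) t := by
  rw [← fderiv_uncurry_apply_eq_inner_gradient hF]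
  exact hF.hasFDerivAt.comp_hasDerivAt t (hx.prodMk hu)

/-- The feedback direction `H(u)ᵀ∇Φ(x, u)` of the controller: the gradient of the reduced cost
`u ↦ Φ (h u) u`, except that the partial gradients of `Φ` are taken at the measured state `x`
instead of the steady state `h u`. -/
noncomputable def feedbackGradient (h : U → X) (Φ : X → U → ℝ) (x : X) (u : U) : U :=
  ContinuousLinearMap.adjoint (fderiv ℝ h u) (gradient (fun y => Φ y u) x) +
    gradient (fun v => Φ x v) u

theorem hasGradientAt_reducedCost {h : U → X} {Φ : X → U → ℝ} {u : U}
    (hh : DifferentiableAt ℝ h u) (hΦ : DifferentiableAt ℝ (Function.uncurry Φ) (h u, u)) :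
    HasGradientAt (fun v => Φ (h v) v) (feedbackGradient h Φ (h u) u) u := by
  rw [hasGradientAt_iff_hasFDerivAt]
  refine (hΦ.hasFDerivAt.comp (f := fun v => (h v, v)) u
    (hh.hasFDerivAt.prodMk (hasFDerivAt_id u))).congr_fderiv ?_
  ext v
  simp only [ContinuousLinearMap.comp_apply, ContinuousLinearMap.prod_apply,
    ContinuousLinearMap.id_apply, fderiv_uncurry_apply_eq_inner_gradient hΦ, feedbackGradient,
    InnerProductSpace.toDual_apply_apply, inner_add_left, ContinuousLinearMap.adjoint_inner_left]

theorem feedbackGradient_sub (h : U → X) (Φ : X → U → ℝ) (x' x : X) (u : U) :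
    feedbackGradient h Φ x' u - feedbackGradient h Φ x u =
      ContinuousLinearMap.adjoint (fderiv ℝ h u)
          (gradient (fun y => Φ y u) x' - gradient (fun y => Φ y u) x) +
        (gradient (fun v => Φ x' v) u - gradient (fun v => Φ x v) u) := by
  rw [map_sub, sub_add_sub_comm, feedbackGradient, feedbackGradient]

end PartialGradients

section Dissipation

variable {X U : Type*} [NormedAddCommGroup X] [InnerProductSpace ℝ X] [CompleteSpace X]
  [NormedAddCommGroup U] [InnerProductSpace ℝ U] [CompleteSpace U]
  {f : X → U → X} {h : U → X} {W : X → U → ℝ} {φ : U → ℝ} {G : X → U → U} {Q : U → U →L[ℝ] U}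
  {γ ζ L : ℝ}

theorem antitoneOn_add_of_inexact_gradient_feedback (hζ : 0 < ζ) (hL : 0 < L)
    (hφ : Differentiable ℝ φ) (hW : Differentiable ℝ (Function.uncurry W))
    (hW_decay : ∀ x u, ⟪gradient (fun y => W y u) x, f x u⟫ ≤ -γ * ‖x - h u‖ ^ 2)
    (hW_gradu : ∀ x u, ‖gradient (fun v => W x v) u‖ ≤ ζ * ‖x - h u‖)
    (hG : ∀ x u, ‖G x u - gradient φ u‖ ≤ L * ‖x - h u‖)
    (hQ_pos : ∀ u, (Q u).IsPositive) (hQ_bound : ∀ u, ‖Q u‖ ≤ γ / (ζ * L))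
    {x : ℝ → X} {u : ℝ → U} (hx : ∀ t ≥ (0 : ℝ), HasDerivAt x (f (x t) (u t)) t)
    (hu : ∀ t ≥ (0 : ℝ), HasDerivAt u (-Q (u t) (G (x t) (u t))) t) :
    AntitoneOn (fun t => φ (u t) + L / ζ * W (x t) (u t)) (Set.Ici 0) := by
  have hφ_deriv : ∀ t ≥ (0 : ℝ), HasDerivAt (fun τ => φ (u τ))
      ⟪gradient φ (u t), -Q (u t) (G (x t) (u t))⟫ t := fun t ht => by
    rw [inner_gradient_left]
    exact (hφ (u t)).hasFDerivAt.comp_hasDerivAt t (hu t ht)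
  have hderiv := fun t (ht : t ≥ (0 : ℝ)) => (hφ_deriv t ht).add
    ((hasDerivAt_uncurry_along (hW (x t, u t)) (hx t ht) (hu t ht)).const_mul (L / ζ))
  exact antitoneOn_of_hasDerivWithinAt_nonpos (convex_Ici 0)
    (fun t ht => (hderiv t ht).continuousAt.continuousWithinAt)
    (fun t ht => (hderiv t (interior_subset ht)).hasDerivWithinAt)
    (fun t _ => inexact_gradient_dissipation_nonpos hζ hL (hQ_pos _) (hQ_bound _) (hG _ _)
      (hW_gradu _ _) (hW_decay _ _))

end Dissipation

section Trapping

theorem mem_ball_of_lt_on_sphere {E : Type*} [PseudoMetricSpace E] {φ : E → ℝ} {c : E} {r m : ℝ}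
    (hm : ∀ v ∈ sphere c r, m ≤ φ v) {u : ℝ → E} (hu : ContinuousOn u (Set.Ici 0))
    (hu₀ : u 0 ∈ ball c r) (hφ : ∀ t ≥ (0 : ℝ), φ (u t) < m) : ∀ t ≥ (0 : ℝ), u t ∈ ball c r := by
  intro t ht
  by_contra hout
  have hdist : ContinuousOn (fun τ => dist (u τ) c) (Set.Icc 0 t) :=
    (continuous_id.dist continuous_const).comp_continuousOn (hu.mono Set.Icc_subset_Ici_self)
  obtain ⟨τ, hτ, hτr⟩ := intermediate_value_Icc ht hdist
    ⟨(mem_ball.1 hu₀).le, not_lt.1 (mt mem_ball.2 hout)⟩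
  exact (hφ τ hτ.1).not_ge (hm (u τ) hτr)

theorem exists_tube_subset {X U : Type*} [PseudoMetricSpace X] [TopologicalSpace U] {h : U → X}
    {us : U} (hh : ContinuousAt h us) {V : Set (X × U)} (hV : V ∈ 𝓝 (h us, us)) :
    ∃ ε > 0, ∀ᶠ v in 𝓝 us, ∀ y, dist y (h v) < ε → (y, v) ∈ V := by
  rw [nhds_prod_eq, (nhds_basis_ball.prod (𝓝 us).basis_sets).mem_iff] at hV
  obtain ⟨⟨ρ, S⟩, ⟨hρ, hS⟩, hsub⟩ := hV
  refine ⟨ρ / 2, half_pos hρ, ?_⟩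
  filter_upwards [hS, hh (ball_mem_nhds _ (half_pos hρ))] with v hvS hv y hy
  refine hsub ⟨mem_ball.2 ?_, hvS⟩
  linarith [dist_triangle y (h v) (h us), mem_ball.1 hv]

theorem exists_nhds_forall_mem_of_antitoneOn {X U : Type*} [PseudoMetricSpace X]
    [PseudoMetricSpace U] [ProperSpace U] {h : U → X} {φ : U → ℝ} {w : X → U → ℝ} {us : U} {c : ℝ}
    (hc : 0 < c) (hh : ContinuousAt h us) (hφ : Continuous φ)
    (hw : ContinuousAt (Function.uncurry w) (h us, us))
    (hw_lb : ∀ y v, c * dist y (h v) ^ 2 ≤ w y v) (hw_zero : w (h us) us = 0)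
    (hmin : ∀ᶠ v in 𝓝[≠] us, φ us < φ v) :
    ∀ V ∈ 𝓝 (h us, us), ∃ N ∈ 𝓝 (h us, us), ∀ (x : ℝ → X) (u : ℝ → U),
      ContinuousOn u (Set.Ici 0) → AntitoneOn (fun t => φ (u t) + w (x t) (u t)) (Set.Ici 0) →
      (x 0, u 0) ∈ N → ∀ t ≥ (0 : ℝ), (x t, u t) ∈ V := by
  intro V hV
  obtain ⟨ε, hε, htube⟩ := exists_tube_subset hh hV
  obtain ⟨r, hr, hball⟩ := nhds_basis_closedBall.eventually_iff.1
    (htube.and (eventually_nhdsWithin_iff.1 hmin))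
  have hφ_min : ∀ v ∈ closedBall us r, φ us ≤ φ v := fun v hv => by
    rcases eq_or_ne v us with rfl | hne
    exacts [le_rfl, ((hball hv).2 hne).le]
  obtain ⟨m, hm, hm_le⟩ := (isCompact_sphere us r).exists_forall_le' hφ.continuousOn fun v hv =>
    (hball (sphere_subset_closedBall hv)).2 (ne_of_mem_sphere hv hr.ne')
  have hw_nonneg : ∀ y v, 0 ≤ w y v := fun y v => le_trans (by positivity) (hw_lb y v)
  let P : X × U → ℝ := fun z => φ z.2 + w z.1 z.2
  have hP : ContinuousAt P (h us, us) := (hφ.comp continuous_snd).continuousAt.add hw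
  have hP_lt : P (h us, us) < min m (φ us + c * ε ^ 2) := by
    have hgap : 0 < c * ε ^ 2 := by positivity
    simp only [P, hw_zero, add_zero]
    exact lt_min hm (lt_add_of_pos_right _ hgap)
  refine ⟨_, inter_mem (hP.eventually_lt_const hP_lt) (continuous_snd.continuousAt
    (ball_mem_nhds us hr)), fun x u hu hanti ⟨hP₀, hu₀⟩ => ?_⟩
  have hP_t : ∀ t ≥ (0 : ℝ), φ (u t) + w (x t) (u t) < min m (φ us + c * ε ^ 2) :=
    fun t ht => (hanti Set.self_mem_Ici ht ht).trans_lt hP₀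
  have hu_ball := mem_ball_of_lt_on_sphere hm_le hu hu₀ fun t ht => by
    linarith [(hP_t t ht).trans_le (min_le_left _ _), hw_nonneg (x t) (u t)]
  intro t ht
  have hu_t := ball_subset_closedBall (hu_ball t ht)
  refine (hball hu_t).1 _ (lt_of_pow_lt_pow_left₀ 2 hε.le (lt_of_mul_lt_mul_left ?_ hc.le))
  linarith [(hP_t t ht).trans_le (min_le_right _ _), hw_lb (x t) (u t), hφ_min _ hu_t]

end Trapping

section Stability

variable {X U : Type*} [NormedAddCommGroup X] [InnerProductSpace ℝ X] [CompleteSpace X]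
  [NormedAddCommGroup U] [InnerProductSpace ℝ U] [FiniteDimensional ℝ U]
  {f : X → U → X} {h : U → X} {W : X → U → ℝ} {Q : U → U →L[ℝ] U} {α γ ζ L : ℝ} {us : U}

theorem stable_of_inexact_gradient_feedback {φ : U → ℝ} {G : X → U → U}
    (hα : 0 < α) (hζ : 0 < ζ) (hL : 0 < L) (hh : ContinuousAt h us) (hφ : Differentiable ℝ φ)
    (hW : Differentiable ℝ (Function.uncurry W))
    (hW_lb : ∀ x u, α * ‖x - h u‖ ^ 2 ≤ W x u) (hW_zero : W (h us) us = 0)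
    (hW_decay : ∀ x u, ⟪gradient (fun y => W y u) x, f x u⟫ ≤ -γ * ‖x - h u‖ ^ 2)
    (hW_gradu : ∀ x u, ‖gradient (fun v => W x v) u‖ ≤ ζ * ‖x - h u‖)
    (hG : ∀ x u, ‖G x u - gradient φ u‖ ≤ L * ‖x - h u‖)
    (hQ_pos : ∀ u, (Q u).IsPositive) (hQ_bound : ∀ u, ‖Q u‖ ≤ γ / (ζ * L))
    (hmin : ∀ᶠ v in 𝓝[≠] us, φ us < φ v) :
    ∀ V ∈ 𝓝 (h us, us), ∃ N ∈ 𝓝 (h us, us), ∀ (x : ℝ → X) (u : ℝ → U),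
      (∀ t ≥ (0 : ℝ), HasDerivAt x (f (x t) (u t)) t) →
      (∀ t ≥ (0 : ℝ), HasDerivAt u (-Q (u t) (G (x t) (u t))) t) →
      (x 0, u 0) ∈ N → ∀ t ≥ (0 : ℝ), (x t, u t) ∈ V := by
  have hδ : 0 < L / ζ := div_pos hL hζ
  have hproper : ProperSpace U := FiniteDimensional.proper ℝ U
  have hw_lb : ∀ x u, L / ζ * α * dist x (h u) ^ 2 ≤ L / ζ * W x u := fun x u => by
    rw [mul_assoc, dist_eq_norm]
    exact mul_le_mul_of_nonneg_left (hW_lb x u) hδ.le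
  intro V hV
  obtain ⟨N, hN, hstable⟩ := exists_nhds_forall_mem_of_antitoneOn (w := fun x u => L / ζ * W x u)
    (mul_pos hδ hα) hh hφ.continuous (hW.continuous.const_mul _).continuousAt hw_lb
    (by rw [hW_zero, mul_zero]) hmin V hV
  exact ⟨N, hN, fun x u hx hu => hstable x u
    (fun t ht => (hu t ht).continuousAt.continuousWithinAt)
    (antitoneOn_add_of_inexact_gradient_feedback hζ hL hφ hW hW_decay hW_gradu hG hQ_pos hQ_bound
      hx hu)⟩

theorem stmt4_general {Φ : X → U → ℝ}
    (hα : 0 < α) (hζ : 0 < ζ) (hL : 0 < L) (hh : Differentiable ℝ h)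
    (hW : Differentiable ℝ (Function.uncurry W))
    (hW_lb : ∀ x u, α * ‖x - h u‖ ^ 2 ≤ W x u) (hW_zero : W (h us) us = 0)
    (hW_decay : ∀ x u, ⟪gradient (fun y => W y u) x, f x u⟫ ≤ -γ * ‖x - h u‖ ^ 2)
    (hW_gradu : ∀ x u, ‖gradient (fun v => W x v) u‖ ≤ ζ * ‖x - h u‖)
    (hΦ : Differentiable ℝ (Function.uncurry Φ))
    (hLbound : ∀ x u,
      ‖feedbackGradient h Φ x u - feedbackGradient h Φ (h u) u‖ ≤ L * ‖x - h u‖)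
    (hQ_pos : ∀ u, (Q u).IsPositive) (hQ_bound : ∀ u, ‖Q u‖ ≤ γ / (ζ * L))
    (hmin : ∀ᶠ v in 𝓝[≠] us, Φ (h us) us < Φ (h v) v) :
    ∀ V ∈ 𝓝 (h us, us), ∃ N ∈ 𝓝 (h us, us), ∀ (x : ℝ → X) (u : ℝ → U),
      (∀ t ≥ (0 : ℝ), HasDerivAt x (f (x t) (u t)) t) →
      (∀ t ≥ (0 : ℝ), HasDerivAt u (-Q (u t) (feedbackGradient h Φ (x t) (u t))) t) →
      (x 0, u 0) ∈ N → ∀ t ≥ (0 : ℝ), (x t, u t) ∈ V := by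
  have hφ : ∀ u, HasGradientAt (fun v => Φ (h v) v) (feedbackGradient h Φ (h u) u) u :=
    fun u => hasGradientAt_reducedCost (hh u) (hΦ (h u, u))
  refine stable_of_inexact_gradient_feedback hα hζ hL hh.continuous.continuousAt
    (fun u => (hφ u).differentiableAt) hW hW_lb hW_zero hW_decay hW_gradu (fun x u => ?_)
    hQ_pos hQ_bound hmin
  rw [(hφ u).gradient]
  exact hLbound x u

end Stability

/-- Strict local minimizers of `min {Φ(x,u) : x = h(u)}` are Lyapunov-stable
equilibria of the interconnection `ẋ = f(x,u)`, `u̇ = -Q(u)H(u)ᵀ∇Φ(x,u)`. -/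
theorem stmt4 {n p : ℕ}
    (f : EuclideanSpace ℝ (Fin n) → EuclideanSpace ℝ (Fin p) → EuclideanSpace ℝ (Fin n))
    (h : EuclideanSpace ℝ (Fin p) → EuclideanSpace ℝ (Fin n))
    (W : EuclideanSpace ℝ (Fin n) → EuclideanSpace ℝ (Fin p) → ℝ)
    (Φ : EuclideanSpace ℝ (Fin n) → EuclideanSpace ℝ (Fin p) → ℝ)
    (Q : EuclideanSpace ℝ (Fin p) → EuclideanSpace ℝ (Fin p) →L[ℝ] EuclideanSpace ℝ (Fin p))
    (ℓ : ℝ≥0) (α β γ ζ L : ℝ)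
    (hα : 0 < α) (hβ : 0 < β) (hγ : 0 < γ) (hζ : 0 < ζ) (hL : 0 < L)
    -- plant
    (hf_smooth : ContDiff ℝ 1 (Function.uncurry f))
    (hh_diff : Differentiable ℝ h)
    (hh_lip : LipschitzWith ℓ h)
    (hsteady : ∀ u, f (h u) u = 0)
    -- Lyapunov function for the plant
    (hW_diff : Differentiable ℝ (Function.uncurry W))
    (hW_lb : ∀ x u, α * ‖x - h u‖ ^ 2 ≤ W x u)
    (hW_ub : ∀ x u, W x u ≤ β * ‖x - h u‖ ^ 2)
    (hW_decay : ∀ x u, ⟪gradient (fun y => W y u) x, f x u⟫ ≤ -γ * ‖x - h u‖ ^ 2)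
    (hW_gradu : ∀ x u, ‖gradient (fun v => W x v) u‖ ≤ ζ * ‖x - h u‖)
    -- objective
    (hΦ_smooth : ContDiff ℝ 1 (Function.uncurry Φ))
    (hlevel : ∀ c : ℝ, IsCompact {u : EuclideanSpace ℝ (Fin p) | Φ (h u) u ≤ c})
    (hLbound : ∀ x x' u,
      ‖(ContinuousLinearMap.adjoint (fderiv ℝ h u)
            (gradient (fun y => Φ y u) x' - gradient (fun y => Φ y u) x) +
          (gradient (fun v => Φ x' v) u - gradient (fun v => Φ x v) u))‖ ≤ L * ‖x' - x‖)
    -- metric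
    (hQ_lip : LocallyLipschitz Q)
    (hQ_symm : ∀ u v w, ⟪Q u v, w⟫ = ⟪v, Q u w⟫)
    (hQ_pos : ∀ u v, v ≠ 0 → 0 < ⟪Q u v, v⟫)
    (hQ_bound : ∃ q : ℝ, (∀ u, ‖Q u‖ ≤ q) ∧ q < γ / (ζ * L))
    -- a strict local minimizer of min {Φ(x,u) : x = h(u)}
    (xs : EuclideanSpace ℝ (Fin n)) (us : EuclideanSpace ℝ (Fin p))
    (hxs : xs = h us)
    (hstrict : ∃ s ∈ 𝓝 us, ∀ v ∈ s, v ≠ us → Φ (h us) us < Φ (h v) v) :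
    -- Lyapunov stability of (xs, us) for the interconnection
    ∀ V ∈ 𝓝 ((xs, us) : EuclideanSpace ℝ (Fin n) × EuclideanSpace ℝ (Fin p)),
      ∃ N ∈ 𝓝 ((xs, us) : EuclideanSpace ℝ (Fin n) × EuclideanSpace ℝ (Fin p)),
        ∀ (x : ℝ → EuclideanSpace ℝ (Fin n)) (u : ℝ → EuclideanSpace ℝ (Fin p)),
          (∀ t ≥ (0 : ℝ), HasDerivAt x (f (x t) (u t)) t) →
          (∀ t ≥ (0 : ℝ), HasDerivAt u
            (-(Q (u t) (ContinuousLinearMap.adjoint (fderiv ℝ h (u t))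
                (gradient (fun y => Φ y (u t)) (x t)) +
              gradient (fun v => Φ (x t) v) (u t)))) t) →
          (x 0, u 0) ∈ N → ∀ t ≥ (0 : ℝ), (x t, u t) ∈ V := by
  obtain ⟨q, hq, hq_lt⟩ := hQ_bound
  subst hxs
  exact stmt4_general hα hζ hL hh_diff hW_diff hW_lb
    (le_antisymm (by simpa using hW_ub (h us) us) (by simpa using hW_lb (h us) us))
    hW_decay hW_gradu (hΦ_smooth.differentiable one_ne_zero)
    (fun x u => by rw [feedbackGradient_sub]; exact hLbound (h u) x u)
    (fun u => isPositive_of_symmetric_of_inner_pos (hQ_symm u) (hQ_pos u))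
    (fun u => (hq u).trans hq_lt.le)
    (eventually_nhdsWithin_iff.2 (eventually_iff_exists_mem.2 hstrict))
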